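/- arXiv:1211.3171 — 2 statements merged into one kernel-verified Lean document; each statement's English description precedes it below -/
import Mathlib

section
/- Let (X,d) be an unbounded metric space and μ a Borel measure on X with 0 < μ(U) < ∞ for every nonempty bounded open set U ⊆ X, let x₀ ∈ X, and assume (VD)^n_{C₀} and (AR)^n_{x₀} hold for some C₀ ≥ 1. Then for every λ > 0 the quantity Q̃(λ) = ((1-a)/(n-1+a))·∫_X (λ+d(x₀,x)^{2-ap})^{(n-1+a)/(a-1)}·d(x₀,x)^{-ap} dμ(x) is finite and strictly positive, it admits the layer-cake representation Q̃(λ) = ((1-a)/(n-1+a))·∫_0^∞ μ(B(x₀,ρ))·f(λ,ρ) dρ, and it satisfies Q̃(λ) ≤ C₀·Q_E(λ), where Q_E(λ) = ((1-a)/(n-1+a))·∫_{ℝ^n} (λ+|x|^{2-ap})^{(n-1+a)/(a-1)}·|x|^{-ap} dx. -/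
/-!
The radial profile `g(t) = (λ + t^s)^α t^{-b}` with `s = 2 - ap > 0`, `α = (n-1+a)/(a-1) < 0` and
`b = ap ≥ 0` is decreasing on `(0,∞)`, tends to `0` at infinity, and satisfies `-g' = f(λ,·)`, so
`g(t) = ∫_t^∞ f(λ,ρ) dρ` for `t > 0`. Inserting this in `∫ g(d(x₀,x)) dμ(x)` and exchanging the
integrals gives the layer-cake formula, for every measure that is finite on balls about `x₀` and
has no atom at `x₀` (`layer_cake`).

The density condition provides arbitrarily small radii `r` with `μ(B(x₀,r)) ≤ c ω_n r^n` for any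
`c > 1`; propagating this by `(VD)` and letting `c → 1` gives `μ(B(x₀,R)) ≤ C₀ ω_n R^n` for every
`R > 0` (`measure_ball_le`). In particular `x₀` is not an atom, and comparing the layer-cake formulas
of `μ` and of Lebesgue measure gives `Q̃ ≤ C₀ Q_E`. Finiteness follows from that of the Euclidean
integral, whose integrand is `O(|x|^{-ap})` at `0`, with `ap < 2 < n`, and `O(|x|^{-(2n-2)})` at
infinity (`integrable_euclidean`).
-/

open MeasureTheory Filter Topology Metric

/-- Volume of the unit ball in `ℝ^n`. -/
noncomputable def omegaBall (n : ℕ) : ℝ :=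
  Real.pi ^ ((n : ℝ) / 2) / Real.Gamma ((n : ℝ) / 2 + 1)

/-- The kernel `f(λ,ρ)` appearing in the layer-cake representation of `Q_E` and `Q̃`. -/
noncomputable def fAux (n : ℕ) (a p lam ρ : ℝ) : ℝ :=
  (lam + ρ ^ (2 - a * p)) ^ ((n : ℝ) / (a - 1)) * ρ ^ (-(a * p) - 1) *
    (ρ ^ (2 - a * p) * ((((n : ℝ) - 1 + a) / (1 - a)) * (2 - a * p) + a * p) + a * p * lam)

/-- The auxiliary function `Q_E(λ)` built from the Euclidean extremals. -/
noncomputable def QE (n : ℕ) (a p lam : ℝ) : ℝ :=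
  ((1 - a) / ((n : ℝ) - 1 + a)) *
    ∫ x : EuclideanSpace ℝ (Fin n),
      (lam + ‖x‖ ^ (2 - a * p)) ^ (((n : ℝ) - 1 + a) / (a - 1)) * ‖x‖ ^ (-(a * p))

/-- The volume condition `(VD)^m_{C₀}`: `μ(B(x,R))/μ(B(x,r)) ≤ C₀ (R/r)^m`
for all `x` and `0 < r < R`. -/
def VDcond {X : Type*} [MetricSpace X] [MeasurableSpace X]
    (μ : Measure X) (m C₀ : ℝ) : Prop :=
  ∀ x : X, ∀ r R : ℝ, 0 < r → r < R →
    μ (ball x R) ≤ ENNReal.ofReal (C₀ * (R / r) ^ m) * μ (ball x r)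

/-- The density condition `(AR)^n_{x₀}`: `liminf_{r → 0} μ(B(x₀,r))/(ω_n r^n) = 1`. -/
def ARcond {X : Type*} [MetricSpace X] [MeasurableSpace X]
    (μ : Measure X) (x₀ : X) (n : ℕ) : Prop :=
  Filter.liminf (fun r : ℝ => (μ (ball x₀ r)).toReal / (omegaBall n * r ^ n)) (𝓝[>] 0) = 1

/-- The auxiliary function `Q̃(λ)` on a metric measure space `(X,d,μ)` with base point `x₀`. -/
noncomputable def Qtilde {X : Type*} [MetricSpace X] [MeasurableSpace X]
    (μ : Measure X) (x₀ : X) (n : ℕ) (a p lam : ℝ) : ENNReal :=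
  ENNReal.ofReal ((1 - a) / ((n : ℝ) - 1 + a)) *
    ∫⁻ x, ENNReal.ofReal
      ((lam + dist x₀ x ^ (2 - a * p)) ^ (((n : ℝ) - 1 + a) / (a - 1)) *
        dist x₀ x ^ (-(a * p))) ∂μ

/-! ### The radial profile and its derivative -/

/-- The radial profile `t ↦ (λ + t^s)^α t^{-b}` whose integrals are `Q_E` and `Q̃`. -/
noncomputable def profile (lam s α b t : ℝ) : ℝ := (lam + t ^ s) ^ α * t ^ (-b)

/-- Minus the derivative of `profile`; it is `fAux` for the exponents of the problem. -/
noncomputable def profileDeriv (lam s α b t : ℝ) : ℝ :=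
  (lam + t ^ s) ^ (α - 1) * t ^ (-b - 1) * (t ^ s * (-α * s + b) + b * lam)

lemma profile_nonneg {lam s α b t : ℝ} (hlam : 0 < lam) (ht : 0 ≤ t) :
    0 ≤ profile lam s α b t := by
  unfold profile; positivity

lemma profile_pos {lam s α b t : ℝ} (hlam : 0 < lam) (ht : 0 < t) :
    0 < profile lam s α b t := by
  unfold profile; positivity

lemma measurable_profile (lam s α b : ℝ) : Measurable (profile lam s α b) := by
  unfold profile; fun_prop

lemma measurable_profileDeriv (lam s α b : ℝ) : Measurable (profileDeriv lam s α b) := by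
  unfold profileDeriv; fun_prop

lemma profileDeriv_nonneg {lam s α b t : ℝ} (hlam : 0 < lam) (hs : 0 < s) (hα : α < 0)
    (hb : 0 ≤ b) (ht : 0 < t) : 0 ≤ profileDeriv lam s α b t := by
  have h : 0 ≤ -α * s := mul_nonneg (by linarith) hs.le
  unfold profileDeriv; positivity

lemma hasDerivAt_profile {lam s α b t : ℝ} (hlam : 0 < lam) (ht : 0 < t) :
    HasDerivAt (profile lam s α b) (-profileDeriv lam s α b t) t := by
  have hpos : 0 < lam + t ^ s := by positivity
  have h1 : HasDerivAt (fun t : ℝ => lam + t ^ s) (s * t ^ (s - 1)) t :=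
    (Real.hasDerivAt_rpow_const (Or.inl ht.ne')).const_add lam
  have h2 := h1.rpow_const (p := α) (Or.inl hpos.ne')
  have h3 : HasDerivAt (fun t : ℝ => t ^ (-b)) (-b * t ^ (-b - 1)) t :=
    Real.hasDerivAt_rpow_const (Or.inl ht.ne')
  refine (h2.mul h3).congr_deriv ?_
  have e1 : (lam + t ^ s) ^ α = (lam + t ^ s) ^ (α - 1) * (lam + t ^ s) := by
    rw [Real.rpow_sub_one hpos.ne']; field_simp
  have e2 : t ^ (-b) = t ^ (-b - 1) * t := by
    rw [Real.rpow_sub_one ht.ne']; field_simp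
  have e3 : t ^ s = t ^ (s - 1) * t := by
    rw [Real.rpow_sub_one ht.ne']; field_simp
  unfold profileDeriv
  rw [e1, e2]
  generalize (lam + t ^ s) ^ (α - 1) = A
  generalize t ^ (-b - 1) = B
  rw [e3]
  ring

lemma tendsto_profile_atTop {lam s α b : ℝ} (hlam : 0 < lam) (hs : 0 < s) (hα : α < 0)
    (hb : 0 ≤ b) : Tendsto (profile lam s α b) atTop (𝓝 0) := by
  have h1 : Tendsto (fun t : ℝ => lam + t ^ s) atTop atTop :=
    tendsto_atTop_add_const_left _ _ (tendsto_rpow_atTop hs)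
  have h2 : Tendsto (fun t : ℝ => (lam + t ^ s) ^ α) atTop (𝓝 0) := by
    have := (tendsto_rpow_neg_atTop (neg_pos.2 hα)).comp h1
    simpa [Function.comp_def] using this
  refine squeeze_zero' ?_ ?_ h2
  · filter_upwards [eventually_ge_atTop 0] with t ht using profile_nonneg hlam ht
  · filter_upwards [eventually_ge_atTop 1] with t ht
    unfold profile
    have h0 : (0 : ℝ) ≤ t := by linarith
    exact mul_le_of_le_one_right (by positivity)
      (Real.rpow_le_one_of_one_le_of_nonpos ht (by linarith))

lemma lintegral_profileDeriv {lam s α b t : ℝ} (hlam : 0 < lam) (hs : 0 < s) (hα : α < 0)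
    (hb : 0 ≤ b) (ht : 0 < t) :
    ∫⁻ ρ in Set.Ioi t, ENNReal.ofReal (profileDeriv lam s α b ρ) =
      ENNReal.ofReal (profile lam s α b t) := by
  have hd : ∀ x ∈ Set.Ici t,
      HasDerivAt (fun x => -profile lam s α b x) (profileDeriv lam s α b x) x := by
    intro x hx
    exact (hasDerivAt_profile (s := s) (α := α) (b := b) hlam (ht.trans_le hx)).neg.congr_deriv
      (neg_neg _)
  have hnn : ∀ x ∈ Set.Ioi t, 0 ≤ profileDeriv lam s α b x :=
    fun x hx => profileDeriv_nonneg hlam hs hα hb (ht.trans hx)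
  have hlim : Tendsto (fun x => -profile lam s α b x) atTop (𝓝 0) := by
    simpa using (tendsto_profile_atTop hlam hs hα hb).neg
  have hint := integrableOn_Ioi_deriv_of_nonneg' hd hnn hlim
  have heq := integral_Ioi_of_hasDerivAt_of_nonneg' hd hnn hlim
  rw [← ofReal_integral_eq_lintegral_ofReal hint
    ((ae_restrict_iff' measurableSet_Ioi).2 (ae_of_all _ hnn)), heq]
  simp

/-! ### Exchange of integrals -/

/-- Layer-cake formula for the radial profile on a space whose balls about `x₀` are finite and
whose base point is not an atom. -/
lemma layer_cake {X : Type*} [MetricSpace X] [MeasurableSpace X] [BorelSpace X]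
    (μ : Measure X) (x₀ : X) (hfin : ∀ r : ℝ, μ (ball x₀ r) < ⊤) (h0 : μ {x₀} = 0)
    {lam s α b : ℝ} (hlam : 0 < lam) (hs : 0 < s) (hα : α < 0) (hb : 0 ≤ b) :
    ∫⁻ x, ENNReal.ofReal (profile lam s α b (dist x₀ x)) ∂μ =
      ∫⁻ ρ in Set.Ioi (0 : ℝ), μ (ball x₀ ρ) * ENNReal.ofReal (profileDeriv lam s α b ρ) := by
  have : SigmaFinite μ := ⟨⟨{
    set := fun k => ball x₀ (k : ℝ)
    set_mem := fun _ => trivial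
    finite := fun k => hfin k
    spanning := iUnion_ball_nat x₀ }⟩⟩
  set F : ℝ → ENNReal := fun ρ => ENNReal.ofReal (profileDeriv lam s α b ρ) with hF
  have hFm : Measurable F := (measurable_profileDeriv lam s α b).ennreal_ofReal
  have hdm : Measurable (fun x : X => dist x₀ x) := (continuous_const.dist continuous_id).measurable
  have hA : ∀ᵐ x ∂μ, ENNReal.ofReal (profile lam s α b (dist x₀ x)) =
      ∫⁻ ρ in Set.Ioi (0 : ℝ), Set.indicator {q : X × ℝ | dist x₀ q.1 < q.2}
        (fun q => F q.2) (x, ρ) := by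
    have hne : ∀ᵐ x ∂μ, x ≠ x₀ := by
      rw [ae_iff]; simpa using h0
    filter_upwards [hne] with x hx
    have hd : 0 < dist x₀ x := dist_pos.2 hx.symm
    rw [← lintegral_profileDeriv hlam hs hα hb hd]
    have : (fun ρ => Set.indicator {q : X × ℝ | dist x₀ q.1 < q.2} (fun q => F q.2) (x, ρ))
        = Set.indicator (Set.Ioi (dist x₀ x)) F := by
      ext ρ; simp [Set.indicator]
    rw [this, lintegral_indicator measurableSet_Ioi, Measure.restrict_restrict measurableSet_Ioi,
      Set.inter_eq_left.2 (Set.Ioi_subset_Ioi hd.le)]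
  rw [lintegral_congr_ae hA, lintegral_lintegral_swap]
  · refine lintegral_congr fun ρ => ?_
    have : (fun x => Set.indicator {q : X × ℝ | dist x₀ q.1 < q.2} (fun q => F q.2) (x, ρ))
        = Set.indicator (ball x₀ ρ) (fun _ => F ρ) := by
      ext x; simp [Set.indicator, dist_comm]
    rw [this, lintegral_indicator measurableSet_ball, setLIntegral_const, mul_comm]
  · refine Measurable.aemeasurable ?_
    exact (hFm.comp measurable_snd).indicator
      (measurableSet_lt (hdm.comp measurable_fst) measurable_snd)

/-! ### Measure of balls -/

lemma omegaBall_pos (n : ℕ) : 0 < omegaBall n := by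
  unfold omegaBall
  have : 0 < Real.Gamma ((n : ℝ) / 2 + 1) := Real.Gamma_pos_of_pos (by positivity)
  positivity

lemma volume_ball_euclidean {n : ℕ} (hn : 0 < n) {r : ℝ} (hr : 0 ≤ r) :
    volume (ball (0 : EuclideanSpace ℝ (Fin n)) r) = ENNReal.ofReal (omegaBall n * r ^ n) := by
  have : Nonempty (Fin n) := ⟨⟨0, hn⟩⟩
  rw [EuclideanSpace.volume_ball, Fintype.card_fin, ← ENNReal.ofReal_pow hr,
    ← ENNReal.ofReal_mul (by positivity), mul_comm]
  congr 2
  unfold omegaBall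
  congr 1
  rw [Real.sqrt_eq_rpow, ← Real.rpow_natCast, ← Real.rpow_mul Real.pi_pos.le]
  congr 1; ring

/-- The density condition selects small radii at which balls have nearly Euclidean measure at
most, and `(VD)` propagates the bound to all larger balls. -/
lemma measure_ball_le {X : Type*} [MetricSpace X] [MeasurableSpace X]
    (μ : Measure X) (x₀ : X) (hfin : ∀ r : ℝ, μ (ball x₀ r) < ⊤) {n : ℕ} {C₀ : ℝ}
    (hC₀ : 1 ≤ C₀) (hVD : VDcond μ n C₀) (hAR : ARcond μ x₀ n) {R : ℝ} (hR : 0 < R) :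
    μ (ball x₀ R) ≤ ENNReal.ofReal (C₀ * (omegaBall n * R ^ n)) := by
  have hω := omegaBall_pos n
  have key : ∀ c : ℝ, 1 < c → (μ (ball x₀ R)).toReal ≤ C₀ * (omegaBall n * R ^ n) * c := by
    intro c hc
    have hfreq : ∃ᶠ r : ℝ in 𝓝[>] 0, (μ (ball x₀ r)).toReal / (omegaBall n * r ^ n) < c := by
      by_contra hcon
      rw [not_frequently] at hcon
      simp only [not_lt] at hcon
      unfold ARcond at hAR
      rw [liminf_eq] at hAR
      by_cases hbdd : BddAbove {b : ℝ | ∀ᶠ r : ℝ in 𝓝[>] 0,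
          b ≤ (μ (ball x₀ r)).toReal / (omegaBall n * r ^ n)}
      · have := le_csSup hbdd hcon
        linarith
      · -- the supremum of an unbounded set of reals is `0` by convention
        rw [Real.sSup_of_not_bddAbove hbdd] at hAR
        exact zero_ne_one hAR
    have hev : ∀ᶠ r : ℝ in 𝓝[>] 0, 0 < r ∧ r < R := by
      exact Ioo_mem_nhdsGT hR
    obtain ⟨r, hr, hr0, hrR⟩ := (hfreq.and_eventually hev).exists
    rw [div_lt_iff₀ (by positivity)] at hr
    have h1 := hVD x₀ r R hr0 hrR
    have h2 := ENNReal.toReal_mono (ENNReal.mul_lt_top ENNReal.ofReal_lt_top (hfin r)).ne h1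
    rw [ENNReal.toReal_mul, ENNReal.toReal_ofReal (by positivity), Real.rpow_natCast] at h2
    calc (μ (ball x₀ R)).toReal ≤ C₀ * (R / r) ^ n * (μ (ball x₀ r)).toReal := h2
      _ ≤ C₀ * (R / r) ^ n * (c * (omegaBall n * r ^ n)) := by gcongr
      _ = C₀ * (omegaBall n * R ^ n) * c := by
        rw [div_pow]; field_simp
  have hlim : Tendsto (fun c : ℝ => C₀ * (omegaBall n * R ^ n) * c) (𝓝[>] 1)
      (𝓝 (C₀ * (omegaBall n * R ^ n) * 1)) :=
    ((continuous_const.mul continuous_id).tendsto 1).mono_left nhdsWithin_le_nhds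
  have hle := ge_of_tendsto hlim (eventually_nhdsWithin_of_forall fun c hc => key c hc)
  rw [mul_one] at hle
  rw [← ENNReal.ofReal_toReal (hfin R).ne]
  exact ENNReal.ofReal_le_ofReal hle

lemma measure_singleton_eq_zero {X : Type*} [MetricSpace X] [MeasurableSpace X]
    (μ : Measure X) (x₀ : X) {n : ℕ} (hn : 0 < n) {K : ℝ}
    (h : ∀ R : ℝ, 0 < R → μ (ball x₀ R) ≤ ENNReal.ofReal (K * (omegaBall n * R ^ n))) :
    μ {x₀} = 0 := by
  have hlim : Tendsto (fun R : ℝ => ENNReal.ofReal (K * (omegaBall n * R ^ n))) (𝓝[>] 0) (𝓝 0) := by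
    have hc : Continuous fun R : ℝ => ENNReal.ofReal (K * (omegaBall n * R ^ n)) :=
      ENNReal.continuous_ofReal.comp (by fun_prop)
    have := (hc.tendsto 0).mono_left (nhdsWithin_le_nhds (s := Set.Ioi 0))
    simpa [hn.ne'] using this
  refine le_antisymm (ge_of_tendsto hlim (eventually_nhdsWithin_of_forall fun R hR => ?_)) bot_le
  exact (measure_mono (Set.singleton_subset_iff.2 (mem_ball_self hR))).trans (h R hR)

/-! ### Integrability on Euclidean space -/

/-- Integrability over `ℝ^n` in terms of the exponents of the profile at `0` and at infinity. -/
lemma integrable_euclidean {n : ℕ} (hn : 0 < n) {lam s α b : ℝ} (hlam : 0 < lam)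
    (hα : α < 0) (hbn : b < n) (hdecay : s * α - b < -n) :
    Integrable (fun x : EuclideanSpace ℝ (Fin n) => profile lam s α b ‖x‖) := by
  have : Nonempty (Fin n) := ⟨⟨0, hn⟩⟩
  rw [integrable_fun_norm_addHaar volume (f := profile lam s α b)]
  rw [finrank_euclideanSpace_fin, ← Set.Ioc_union_Ioi_eq_Ioi zero_le_one]
  have hm : Measurable fun y : ℝ => y ^ (n - 1) • profile lam s α b y := by
    have := measurable_profile lam s α b
    simp only [smul_eq_mul]; fun_prop
  have hpow : ∀ y : ℝ, 0 < y → y ^ (n - 1) = y ^ ((n : ℝ) - 1) := by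
    intro y hy
    rw [← Real.rpow_natCast, Nat.cast_sub (by omega)]; simp
  refine IntegrableOn.union ?_ ?_
  · have hI : IntegrableOn (fun y : ℝ => lam ^ α * y ^ ((n : ℝ) - 1 - b)) (Set.Ioc 0 1) := by
      refine Integrable.const_mul ?_ _
      have := intervalIntegral.intervalIntegrable_rpow' (a := 0) (b := 1)
        (r := (n : ℝ) - 1 - b) (by linarith)
      exact (intervalIntegrable_iff_integrableOn_Ioc_of_le zero_le_one).1 this
    refine Integrable.mono' hI hm.aestronglyMeasurable ?_
    refine (ae_restrict_iff' measurableSet_Ioc).2 (ae_of_all _ fun y hy => ?_)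
    have hy0 : 0 < y := hy.1
    have hg := profile_nonneg (s := s) (α := α) (b := b) hlam hy0.le
    rw [Real.norm_of_nonneg (by simp only [smul_eq_mul]; positivity), smul_eq_mul, hpow y hy0]
    have h1 : (lam + y ^ s) ^ α ≤ lam ^ α :=
      Real.rpow_le_rpow_of_nonpos hlam (by linarith [Real.rpow_pos_of_pos hy0 s]) hα.le
    calc y ^ ((n : ℝ) - 1) * profile lam s α b y
        ≤ y ^ ((n : ℝ) - 1) * (lam ^ α * y ^ (-b)) := by unfold profile; gcongr
      _ = lam ^ α * y ^ ((n : ℝ) - 1 - b) := by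
        rw [sub_eq_add_neg _ b, Real.rpow_add hy0]; ring
  · have hI : IntegrableOn (fun y : ℝ => y ^ ((n : ℝ) - 1 + (s * α - b))) (Set.Ioi 1) :=
      integrableOn_Ioi_rpow_of_lt (by linarith) one_pos
    refine Integrable.mono' hI hm.aestronglyMeasurable ?_
    refine (ae_restrict_iff' measurableSet_Ioi).2 (ae_of_all _ fun y hy => ?_)
    have hy0 : 0 < y := one_pos.trans hy
    have hg := profile_nonneg (s := s) (α := α) (b := b) hlam hy0.le
    rw [Real.norm_of_nonneg (by simp only [smul_eq_mul]; positivity), smul_eq_mul, hpow y hy0]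
    have h1 : (lam + y ^ s) ^ α ≤ (y ^ s) ^ α :=
      Real.rpow_le_rpow_of_nonpos (by positivity) (by linarith) hα.le
    calc y ^ ((n : ℝ) - 1) * profile lam s α b y
        ≤ y ^ ((n : ℝ) - 1) * ((y ^ s) ^ α * y ^ (-b)) := by unfold profile; gcongr
      _ = y ^ ((n : ℝ) - 1 + (s * α - b)) := by
        rw [← Real.rpow_mul hy0.le, Real.rpow_add hy0, sub_eq_add_neg (s * α) b,
          Real.rpow_add hy0 (s * α)]

/-! ### Comparison of the two integrals -/

/-- on an unbounded metric measure space satisfying `(VD)^n_{C₀}` and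
`(AR)^n_{x₀}`, the quantity `Q̃(λ)` is positive and finite, admits the layer-cake
representation `Q̃(λ) = ((1-a)/(n-1+a)) ∫_0^∞ μ(B(x₀,ρ)) f(λ,ρ) dρ`, and satisfies
`Q̃(λ) ≤ C₀ Q_E(λ)`. -/
theorem Qtilde_finite_layer_cake {X : Type*} [MetricSpace X]
    [MeasurableSpace X] [BorelSpace X]
    (hub : ¬ Bornology.IsBounded (Set.univ : Set X)) (μ : Measure X)
    (hvol : ∀ U : Set X, IsOpen U → U.Nonempty → Bornology.IsBounded U → 0 < μ U ∧ μ U < ⊤)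
    (n : ℕ) (hn : 3 ≤ n) (a p : ℝ) (ha0 : 0 ≤ a) (ha1 : a < 1)
    (hp : p = 2 * n / (n - 2 + 2 * a))
    (x₀ : X) (C₀ : ℝ) (hC₀ : 1 ≤ C₀) (hVD : VDcond μ n C₀) (hAR : ARcond μ x₀ n)
    (lam : ℝ) (hlam : 0 < lam) :
    0 < Qtilde μ x₀ n a p lam ∧ Qtilde μ x₀ n a p lam < ⊤ ∧
      Qtilde μ x₀ n a p lam =
        ENNReal.ofReal ((1 - a) / ((n : ℝ) - 1 + a)) *
          ∫⁻ ρ in Set.Ioi (0 : ℝ), μ (ball x₀ ρ) * ENNReal.ofReal (fAux n a p lam ρ) ∧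
        Qtilde μ x₀ n a p lam ≤ ENNReal.ofReal (C₀ * QE n a p lam) := by
  have hn' : (3 : ℝ) ≤ n := by exact_mod_cast hn
  have hn0 : 0 < n := by omega
  have hD : 0 < (n : ℝ) - 2 + 2 * a := by linarith
  have hE : 0 < (n : ℝ) - 1 + a := by linarith
  have h1a : 0 < 1 - a := by linarith
  have hc : 0 < (1 - a) / ((n : ℝ) - 1 + a) := div_pos h1a hE
  have hb : 0 ≤ a * p := by rw [hp]; positivity
  have hs_eq : 2 - a * p = 2 * (n - 2) * (1 - a) / (n - 2 + 2 * a) := by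
    rw [hp]; field_simp; ring
  have hs : 0 < 2 - a * p := by
    rw [hs_eq]; exact div_pos (mul_pos (by linarith) h1a) hD
  have hα : ((n : ℝ) - 1 + a) / (a - 1) < 0 := div_neg_of_pos_of_neg hE (by linarith)
  have ha1' : a - 1 ≠ 0 := by linarith
  -- the integrand on `ℝ^n` decays exactly like `|x|^{-(2n-2)}`
  have hdec : (2 - a * p) * (((n : ℝ) - 1 + a) / (a - 1)) - a * p = -(2 * n - 2) := by
    have h : (2 - a * p) * (((n : ℝ) - 1 + a) / (a - 1)) =
        -(2 * (n - 2) * (n - 1 + a) / (n - 2 + 2 * a)) := by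
      rw [hs_eq]; field_simp; ring
    rw [h, hp]; field_simp; ring
  have hf : ∀ ρ, fAux n a p lam ρ =
      profileDeriv lam (2 - a * p) (((n : ℝ) - 1 + a) / (a - 1)) (a * p) ρ := by
    intro ρ
    unfold fAux profileDeriv
    have e1 : ((n : ℝ) - 1 + a) / (a - 1) - 1 = n / (a - 1) := by field_simp; ring
    have e2 : -(((n : ℝ) - 1 + a) / (a - 1)) = ((n : ℝ) - 1 + a) / (1 - a) := by
      rw [← div_neg, neg_sub]
    rw [e1, e2]
  have hfin : ∀ r : ℝ, μ (ball x₀ r) < ⊤ := by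
    intro r
    rcases (ball x₀ r).eq_empty_or_nonempty with h | h
    · simp [h]
    · exact (hvol _ isOpen_ball h isBounded_ball).2
  have hball : ∀ R : ℝ, 0 < R → μ (ball x₀ R) ≤ ENNReal.ofReal (C₀ * (omegaBall n * R ^ n)) :=
    fun R hR => measure_ball_le μ x₀ hfin hC₀ hVD hAR hR
  have hatom := measure_singleton_eq_zero μ x₀ hn0 hball
  have hQ : Qtilde μ x₀ n a p lam = ENNReal.ofReal ((1 - a) / ((n : ℝ) - 1 + a)) *
      ∫⁻ x, ENNReal.ofReal (profile lam (2 - a * p) (((n : ℝ) - 1 + a) / (a - 1)) (a * p)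
        (dist x₀ x)) ∂μ := rfl
  have hQE : QE n a p lam = ((1 - a) / ((n : ℝ) - 1 + a)) *
      ∫ x : EuclideanSpace ℝ (Fin n),
        profile lam (2 - a * p) (((n : ℝ) - 1 + a) / (a - 1)) (a * p) ‖x‖ := rfl
  simp only [hf, hQ, hQE]
  generalize ((n : ℝ) - 1 + a) / (a - 1) = α at *
  have hbn : a * p < n := by linarith
  generalize 2 - a * p = s at *
  generalize a * p = b at *
  have hL := layer_cake μ x₀ hfin hatom hlam hs hα hb
  have hLE := layer_cake (volume : Measure (EuclideanSpace ℝ (Fin n))) 0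
    (fun r => measure_ball_lt_top) (by
      have : Nonempty (Fin n) := ⟨⟨0, hn0⟩⟩
      exact measure_singleton _) hlam hs hα hb
  have hint : Integrable (fun x : EuclideanSpace ℝ (Fin n) => profile lam s α b ‖x‖) :=
    integrable_euclidean hn0 hlam hα hbn (by linarith)
  have hLB := ofReal_integral_eq_lintegral_ofReal hint
    (ae_of_all _ fun x => profile_nonneg hlam (norm_nonneg x))
  simp only [dist_zero_left] at hLE
  have hle : ENNReal.ofReal ((1 - a) / ((n : ℝ) - 1 + a)) *
      ∫⁻ x, ENNReal.ofReal (profile lam s α b (dist x₀ x)) ∂μ ≤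
      ENNReal.ofReal (C₀ * (((1 - a) / ((n : ℝ) - 1 + a)) *
        ∫ x : EuclideanSpace ℝ (Fin n), profile lam s α b ‖x‖)) := by
    rw [← mul_assoc, mul_comm C₀, mul_assoc, ENNReal.ofReal_mul hc.le,
      ENNReal.ofReal_mul (by linarith : (0 : ℝ) ≤ C₀), hLB, hLE, hL]
    gcongr
    rw [← lintegral_const_mul' _ _ ENNReal.ofReal_ne_top]
    refine setLIntegral_mono' measurableSet_Ioi fun ρ hρ => ?_
    rw [← mul_assoc]
    gcongr
    rw [volume_ball_euclidean hn0 (le_of_lt hρ), ← ENNReal.ofReal_mul (by linarith)]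
    exact hball ρ hρ
  refine ⟨?_, hle.trans_lt ENNReal.ofReal_lt_top, by rw [hL], hle⟩
  refine ENNReal.mul_pos (ENNReal.ofReal_pos.2 hc).ne' (ne_of_gt ?_)
  have hm : Measurable fun x : X => ENNReal.ofReal (profile lam s α b (dist x₀ x)) :=
    ((measurable_profile lam s α b).comp
      (continuous_const.dist continuous_id).measurable).ennreal_ofReal
  rw [lintegral_pos_iff_support hm]
  -- the integrand is positive off `x₀`, and `B(x₀,1) \ {x₀}` has positive measure
  have h1 : 0 < μ (ball x₀ 1 \ {x₀}) := by
    rw [measure_sdiff_null hatom]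
    exact (hvol _ isOpen_ball ⟨x₀, mem_ball_self one_pos⟩ isBounded_ball).1
  refine h1.trans_le (measure_mono fun x hx => ?_)
  have hx' : x₀ ≠ x := fun h => hx.2 h.symm
  exact (ENNReal.ofReal_pos.2 (profile_pos hlam (dist_pos.2 hx'))).ne'
end

section
/- Let Q, q : (0,∞) → (0,∞) be differentiable functions with Q'(λ) < 0 and q'(λ) < 0 for all λ > 0. Assume that Q satisfies the differential inequality (-Q'(λ))^{2/p} ≤ C²·(n-2)²·(((n-1+a)/(1-a))·Q(λ) + λ·Q'(λ)) for all λ > 0, that q satisfies the corresponding equality (-q'(λ))^{2/p} = C²·(n-2)²·(((n-1+a)/(1-a))·q(λ) + λ·q'(λ)) for all λ > 0, and that liminf_{λ→0} Q(λ)/q(λ) > 1. Then Q(λ) ≥ q(λ) for every λ > 0. -/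
/-!
Wherever `Q < q`, the two differential relations force `q' ≤ Q'`: for fixed `λ` the map
`ρ ↦ ρ ^ (2 / p) + C² (n - 2)² λ ρ` is increasing, and its value at `-Q'` is at most the value at
`-q'`. Hence `Q - q` is nondecreasing as long as it is negative (`nonneg_of_deriv_nonneg_of_neg`),
so it cannot become negative after having been nonnegative, and the liminf condition makes
it nonnegative near `0`.
-/

open MeasureTheory Filter Topology Metric

/-- A function that starts nonnegative and has nonnegative derivative wherever it is negative
stays nonnegative: compare the endpoint with the last point at which the function is nonnegative. -/
lemma nonneg_of_deriv_nonneg_of_neg {f f' : ℝ → ℝ} {x y : ℝ} (hxy : x ≤ y)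
    (hf : ∀ t ∈ Set.Icc x y, HasDerivAt f (f' t) t)
    (hf' : ∀ t ∈ Set.Icc x y, f t < 0 → 0 ≤ f' t) (hx : 0 ≤ f x) : 0 ≤ f y := by
  have hcont : ContinuousOn f (Set.Icc x y) := fun t ht => (hf t ht).continuousAt.continuousWithinAt
  have hcomp : IsCompact (Set.Icc x y ∩ f ⁻¹' Set.Ici 0) :=
    isCompact_Icc.of_isClosed_subset
      (hcont.preimage_isClosed_of_isClosed isClosed_Icc isClosed_Ici) Set.inter_subset_left
  obtain ⟨s, ⟨hs, hfs⟩, hmax⟩ := hcomp.exists_isGreatest ⟨x, ⟨le_rfl, hxy⟩, hx⟩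
  have hsub : Set.Icc s y ⊆ Set.Icc x y := Set.Icc_subset_Icc_left hs.1
  have hmono : MonotoneOn f (Set.Icc s y) := by
    apply monotoneOn_of_deriv_nonneg (convex_Icc s y) (hcont.mono hsub)
    · rw [interior_Icc]
      exact fun t ht => (hf t (hsub ⟨ht.1.le, ht.2.le⟩)).differentiableAt.differentiableWithinAt
    · rw [interior_Icc]
      intro t ht
      have htI := hsub ⟨ht.1.le, ht.2.le⟩
      rw [(hf t htI).deriv]
      refine hf' t htI (lt_of_not_ge fun h => ?_)
      exact absurd (hmax ⟨htI, h⟩) (not_le.mpr ht.1)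
  exact le_trans hfs (hmono ⟨le_rfl, hs.2⟩ ⟨hs.2, le_rfl⟩ hs.2)

/-- ODE comparison principle. If `Q` satisfies the differential inequality
`(-Q')^{2/p} ≤ C²(n-2)²(((n-1+a)/(1-a))Q + λQ')`, `q` satisfies the corresponding equality,
and `liminf_{λ→0} Q/q > 1`, then `Q ≥ q` on `(0,∞)`. -/
theorem ode_comparison (n : ℕ) (hn : 3 ≤ n) (a p C : ℝ) (ha0 : 0 ≤ a) (ha1 : a < 1)
    (hp : p = 2 * n / (n - 2 + 2 * a)) (hC : 0 < C)
    (Q q Q' q' : ℝ → ℝ)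
    (hQpos : ∀ lam : ℝ, 0 < lam → 0 < Q lam) (hqpos : ∀ lam : ℝ, 0 < lam → 0 < q lam)
    (hQderiv : ∀ lam : ℝ, 0 < lam → HasDerivAt Q (Q' lam) lam)
    (hqderiv : ∀ lam : ℝ, 0 < lam → HasDerivAt q (q' lam) lam)
    (hQ'neg : ∀ lam : ℝ, 0 < lam → Q' lam < 0) (hq'neg : ∀ lam : ℝ, 0 < lam → q' lam < 0)
    (hQineq : ∀ lam : ℝ, 0 < lam →
      (-Q' lam) ^ (2 / p) ≤
        C ^ 2 * ((n : ℝ) - 2) ^ 2 * ((((n : ℝ) - 1 + a) / (1 - a)) * Q lam + lam * Q' lam))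
    (hqeq : ∀ lam : ℝ, 0 < lam →
      (-q' lam) ^ (2 / p) =
        C ^ 2 * ((n : ℝ) - 2) ^ 2 * ((((n : ℝ) - 1 + a) / (1 - a)) * q lam + lam * q' lam))
    (hliminf : 1 < Filter.liminf (fun lam => Q lam / q lam) (𝓝[>] (0 : ℝ))) :
    ∀ lam : ℝ, 0 < lam → q lam ≤ Q lam := by
  have hn' : (3 : ℝ) ≤ n := by exact_mod_cast hn
  have hexp : 0 ≤ 2 / p := by
    have : 0 ≤ (n : ℝ) - 2 + 2 * a := by linarith
    rw [hp]
    positivity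
  have hK : 0 ≤ ((n : ℝ) - 1 + a) / (1 - a) := div_nonneg (by linarith) (by linarith)
  have hA : 0 < C ^ 2 * ((n : ℝ) - 2) ^ 2 := by
    have : 0 < (n : ℝ) - 2 := by linarith
    positivity
  have hev : ∀ᶠ t in 𝓝[>] (0 : ℝ), q t ≤ Q t := by
    rw [Filter.liminf_eq] at hliminf
    -- The real supremum of the empty set is `0`, so a value above `1` rules this case out.
    have hne : {b : ℝ | ∀ᶠ t in 𝓝[>] (0 : ℝ), b ≤ Q t / q t}.Nonempty := by
      by_contra h
      rw [Set.not_nonempty_iff_eq_empty.mp h, Real.sSup_empty] at hliminf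
      linarith
    obtain ⟨b, hb, hb1⟩ := exists_lt_of_lt_csSup hne hliminf
    filter_upwards [hb, self_mem_nhdsWithin] with t ht ht0
    exact (one_le_div (hqpos t ht0)).mp (hb1.le.trans ht)
  intro lam hlam
  obtain ⟨x, hxq, hx0, hxlam⟩ := (hev.and (Ioo_mem_nhdsGT hlam)).exists
  have key : 0 ≤ Q lam - q lam := by
    refine nonneg_of_deriv_nonneg_of_neg (f := fun t => Q t - q t) (f' := fun t => Q' t - q' t)
      hxlam.le (fun t ht => ?_) (fun t ht hneg => ?_) (sub_nonneg.mpr hxq)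
    · have ht0 := hx0.trans_le ht.1
      exact (hQderiv t ht0).sub (hqderiv t ht0)
    · have ht0 := hx0.trans_le ht.1
      by_contra! hlt
      have hpow : (-q' t) ^ (2 / p) ≤ (-Q' t) ^ (2 / p) :=
        Real.rpow_le_rpow (by linarith [hq'neg t ht0]) (by linarith) hexp
      rw [hqeq t ht0] at hpow
      have hlin := le_of_mul_le_mul_left (hpow.trans (hQineq t ht0)) hA
      have h1 := mul_le_mul_of_nonneg_left (sub_neg.mp hneg).le hK
      have h2 := mul_lt_mul_of_pos_left (sub_neg.mp hlt) ht0
      linarith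
  linarith
end
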